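/- For every word w ∈ A* and every α ∈ {0,1}*: min(w∘α) = min(w)∘α (where both sides are undefined simultaneously). -/

import Mathlib

/-!
Two facts carry the proof.

* `∼` is compatible with `∘`: equivalent words have the same letters, and for each letter `a` the
  prefixes preceding the first occurrence of `a` in equivalent words are equivalent
  (`Sim.takeWhile`; this prefix of `uv` is that of `u` when `a` occurs in `u`, and otherwise `u`
  followed by that of `v`, so the property passes through every congruence rule).  The word
  `w ∘ 0` is the prefix before `a = w ∗ 0`, and `a` is characterised by the content of that prefix,
  so `w ∗ 0` depends only on the class of `w`, and so does the class of `w ∘ 0`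
  (`Sim.circ0_eq`).  Reversal gives the same for `∘ 1`.
* A factor of a short-lex least representative is itself short-lex least in its class
  (`IsMinRep.factor`): replacing it by a smaller equivalent word would make the whole word smaller.

Hence `min(w) ∘ b` is equivalent to `w ∘ b` and is the least word of its class, i.e. it is
`min(w ∘ b)` for `b ∈ {0,1}`; the general case follows by induction on `α`.
-/

/-!
Common definitions: words over an alphabet `A` are `List A`; the free monoid
operation is `++` with identity `[]`.  `false` plays the role of `0` and
`true` the role of `1` in `{0,1}*`.
-/

namespace FreeBand

variable {A : Type*}

/-- The content of a word: the set of letters occurring in it. -/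
def cont [DecidableEq A] (w : List A) : Finset A := w.toFinset

/-- The length of the longest prefix of `w` whose content has one fewer letter
than the content of `w`. -/
def prefLen [DecidableEq A] (w : List A) : ℕ :=
  Nat.findGreatest (fun k => (cont (w.take k)).card = (cont w).card - 1) w.length

/-- `w ∘ 0`: the longest prefix of `w` whose content has one fewer letter than
that of `w`; undefined (`none`) on the empty word. -/
def circ0 [DecidableEq A] (w : List A) : Option (List A) :=
  if w = [] then none else some (w.take (prefLen w))

/-- `w ∗ 0`: the letter of `w` immediately following the prefix `w ∘ 0`. -/
def star0 [DecidableEq A] (w : List A) : Option A := w[prefLen w]?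

/-- `w ∘ 1`: the longest suffix of `w` whose content has one fewer letter than
that of `w` (obtained by reversal from `circ0`); undefined on the empty word. -/
def circ1 [DecidableEq A] (w : List A) : Option (List A) :=
  (circ0 w.reverse).map List.reverse

/-- `w ∗ 1`: the letter of `w` immediately preceding the suffix `w ∘ 1`. -/
def star1 [DecidableEq A] (w : List A) : Option A := star0 w.reverse

/-- `w ∘ b` for a single letter `b ∈ {0,1}` (`false = 0`, `true = 1`). -/
def circb [DecidableEq A] (w : List A) (b : Bool) : Option (List A) :=
  bif b then circ1 w else circ0 w

/-- `w ∗ b` for a single letter `b ∈ {0,1}` (`false = 0`, `true = 1`). -/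
def starb [DecidableEq A] (w : List A) (b : Bool) : Option A :=
  bif b then star1 w else star0 w

/-- The partial map `∘ : A* × {0,1}* → A*`:  `w ∘ ε = w` and
`w ∘ (βγ) = (w ∘ β) ∘ γ`; any expression with an undefined subterm is undefined. -/
def circw [DecidableEq A] : List A → List Bool → Option (List A)
  | w, [] => some w
  | w, b :: α => (circb w b).bind fun v => circw v α

/-- The partial map `∗ : A* × {0,1}* → A`:  `w ∗ ε = ⊥`, `w ∗ β` for a single
letter `β` is given by `starb`, and `w ∗ (βγ) = (w ∘ β) ∗ γ` for `γ ≠ ε`. -/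
def starw [DecidableEq A] : List A → List Bool → Option A
  | _, [] => none
  | w, [b] => starb w b
  | w, b :: α => (circb w b).bind fun v => starw v α

/-- The least congruence `∼` on the free monoid `A*` containing `(w², w)` for
every word `w ∈ A*`. -/
inductive Sim : List A → List A → Prop
  | sq (w : List A) : Sim (w ++ w) w
  | refl (w : List A) : Sim w w
  | symm {u v : List A} : Sim u v → Sim v u
  | trans {u v w : List A} : Sim u v → Sim v w → Sim u w
  | append {u v u' v' : List A} : Sim u v → Sim u' v' → Sim (u ++ u') (v ++ v')

/-- The partial function `f_w : {0,1}* → A*`:  `f_ε(ε) = ε`, `f_ε(α) = ⊥` for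
`α ≠ ε`, `f_w(ε) = ⊥` for `w ≠ ε`, and `f_w(βγ) = (w ∗ β) · f_{w ∘ β}(γ)`. -/
def fword [DecidableEq A] : List A → List Bool → Option (List A)
  | w, [] => if w = [] then some [] else none
  | w, b :: γ =>
      (starb w b).bind fun a =>
        (circb w b).bind fun v =>
          (fword v γ).map fun u => a :: u

/-- `K₀(v, w)`: the least `k ≥ 1` such that `w ∗ 0^k` is defined and does not
belong to `cont v`, if such `k` exists; undefined otherwise. -/
noncomputable def K0 [DecidableEq A] (v w : List A) : Option ℕ :=
  letI : DecidablePred fun k =>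
      1 ≤ k ∧ ∃ a, starw w (List.replicate k false) = some a ∧ a ∉ cont v :=
    Classical.decPred _
  letI : Decidable (∃ k, 1 ≤ k ∧ ∃ a,
      starw w (List.replicate k false) = some a ∧ a ∉ cont v) := Classical.dec _
  if h : ∃ k, 1 ≤ k ∧ ∃ a, starw w (List.replicate k false) = some a ∧ a ∉ cont v
  then some (Nat.find h) else none

/-- `K₁(v, w)`: the least `l ≥ 1` such that `v ∗ 1^l` is defined and does not
belong to `cont w`, if such `l` exists; undefined otherwise. -/
noncomputable def K1 [DecidableEq A] (v w : List A) : Option ℕ :=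
  letI : DecidablePred fun l =>
      1 ≤ l ∧ ∃ a, starw v (List.replicate l true) = some a ∧ a ∉ cont w :=
    Classical.decPred _
  letI : Decidable (∃ l, 1 ≤ l ∧ ∃ a,
      starw v (List.replicate l true) = some a ∧ a ∉ cont w) := Classical.dec _
  if h : ∃ l, 1 ≤ l ∧ ∃ a, starw v (List.replicate l true) = some a ∧ a ∉ cont w
  then some (Nat.find h) else none

/-- `m` is the short-lex least word `∼`-equivalent to `w`:  `m ∼ w` and `m` is
`≤` every word `∼`-equivalent to `w` in the short-lex order (length first, then
lexicographic order induced by the linear order on `A`). -/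
def IsMinRep [LinearOrder A] (w m : List A) : Prop :=
  Sim m w ∧ ∀ u : List A, Sim u w →
    m = u ∨ m.length < u.length ∨ (m.length = u.length ∧ List.Lex (· < ·) m u)

/-! ### The congruence and first occurrences of letters -/

theorem Sim.mem_iff {u v : List A} (h : Sim u v) (a : A) : a ∈ u ↔ a ∈ v := by
  induction h with
  | sq w => simp
  | refl w => rfl
  | symm _ ih => exact ih.symm
  | trans _ _ ih₁ ih₂ => exact ih₁.trans ih₂
  | append _ _ ih₁ ih₂ => simp [ih₁, ih₂]

theorem Sim.nil_iff {u v : List A} (h : Sim u v) : u = [] ↔ v = [] := by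
  simp [List.eq_nil_iff_forall_not_mem, h.mem_iff]

theorem Sim.reverse {u v : List A} (h : Sim u v) : Sim u.reverse v.reverse := by
  induction h with
  | sq w => simpa using Sim.sq w.reverse
  | refl w => exact .refl _
  | symm _ ih => exact ih.symm
  | trans _ _ ih₁ ih₂ => exact ih₁.trans ih₂
  | append _ _ ih₁ ih₂ => simpa using Sim.append ih₂ ih₁

theorem takeWhile_ne_append [DecidableEq A] (a : A) (u v : List A) :
    (u ++ v).takeWhile (fun x => x ≠ a) =
      if a ∈ u then u.takeWhile (fun x => x ≠ a) else u ++ v.takeWhile (fun x => x ≠ a) := by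
  induction u with
  | nil => simp
  | cons x u ih =>
    by_cases hx : x = a
    · simp [hx]
    · have hx' : a ≠ x := fun h => hx h.symm
      by_cases ha : a ∈ u <;> simp_all

/-- The prefixes before the first occurrence of a given letter (the whole word if the letter does
not occur) in equivalent words are equivalent. -/
theorem Sim.takeWhile [DecidableEq A] {u v : List A} (h : Sim u v) (a : A) :
    Sim (u.takeWhile (fun x => x ≠ a)) (v.takeWhile (fun x => x ≠ a)) := by
  induction h with
  | sq w =>
    rw [takeWhile_ne_append]
    split_ifs with ha
    · exact .refl _
    · have : w.takeWhile (fun x => x ≠ a) = w :=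
        List.takeWhile_eq_self_iff.2 fun x hx => by
          simpa using fun h : x = a => ha (h ▸ hx)
      rw [this]
      exact .sq w
  | refl w => exact .refl _
  | symm _ ih => exact ih.symm
  | trans _ _ ih₁ ih₂ => exact ih₁.trans ih₂
  | append h₁ h₂ ih₁ ih₂ =>
    rw [takeWhile_ne_append, takeWhile_ne_append]
    simp only [h₁.mem_iff a]
    split_ifs
    · exact ih₁
    · exact .append h₁ ih₂

/-- `IsCut p a s` says that `p`, `a`, `s` are the parts `w ∘ 0`, `w ∗ 0` and the rest of
`w = p ++ a :: s`: the letter `a` is new after `p`, and `s` contributes no further letter. -/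
def IsCut (p : List A) (a : A) (s : List A) : Prop :=
  a ∉ p ∧ ∀ b ∈ s, b = a ∨ b ∈ p

theorem exists_isCut (w : List A) (hw : w ≠ []) : ∃ p a s, w = p ++ a :: s ∧ IsCut p a s := by
  induction w using List.reverseRecOn with
  | nil => exact absurd rfl hw
  | append_singleton w x ih =>
    by_cases hx : x ∈ w
    · obtain ⟨p, a, s, rfl, ha, hs⟩ := ih (List.ne_nil_of_mem hx)
      refine ⟨p, a, s ++ [x], by simp, ha, fun b hb => ?_⟩
      rcases List.mem_append.1 hb with hb | hb
      · exact hs b hb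
      · obtain rfl := List.mem_singleton.1 hb
        rcases List.mem_append.1 hx with h | h
        · exact .inr h
        · rcases List.mem_cons.1 h with h | h
          · exact .inl h
          · exact hs b h
    · exact ⟨w, x, [], rfl, hx, by simp⟩

theorem prefLen_of_isCut [DecidableEq A] {p : List A} {a : A} {s : List A} (h : IsCut p a s) :
    prefLen (p ++ a :: s) = p.length := by
  obtain ⟨ha, hs⟩ := h
  have hcont : cont (p ++ a :: s) = insert a (cont p) := by
    ext b
    simp only [cont, List.mem_toFinset, List.mem_append, List.mem_cons, Finset.mem_insert]
    grind
  have hcard : (cont (p ++ a :: s)).card = (cont p).card + 1 := by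
    rw [hcont, Finset.card_insert_of_notMem (by simpa [cont] using ha)]
  rw [prefLen, Nat.findGreatest_eq_iff]
  refine ⟨by simp, fun _ => by simp [hcard], fun k hk _ h => ?_⟩
  have hsub : insert a (cont p) ⊆ cont ((p ++ a :: s).take k) := by
    obtain ⟨j, rfl⟩ : ∃ j, k = p.length + (j + 1) := ⟨k - p.length - 1, by omega⟩
    intro b
    simp only [cont, List.take_length_add_append, List.take_succ_cons, List.mem_toFinset,
      List.mem_append, List.mem_cons, Finset.mem_insert]
    tauto
  have := Finset.card_le_card hsub
  rw [← hcont] at this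
  omega

theorem circ0_of_isCut [DecidableEq A] {p : List A} {a : A} {s : List A} (h : IsCut p a s) :
    circ0 (p ++ a :: s) = some p := by
  simp [circ0, prefLen_of_isCut h]

theorem takeWhile_of_notMem [DecidableEq A] {p : List A} {a : A} (s : List A) (h : a ∉ p) :
    (p ++ a :: s).takeWhile (fun x => x ≠ a) = p := by
  rw [takeWhile_ne_append, if_neg h]
  simp

/-- On equivalent words, `∘ 0` cuts at the same letter and yields equivalent prefixes. -/
theorem Sim.circ0_eq [DecidableEq A] {p : List A} {a : A} {s v : List A}
    (h : Sim (p ++ a :: s) v) (hc : IsCut p a s) :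
    ∃ q t, v = q ++ a :: t ∧ circ0 v = some q ∧ Sim p q := by
  have hav : a ∈ v := (h.mem_iff a).1 (by simp)
  obtain ⟨q, t, rfl, haq⟩ := List.eq_append_cons_of_mem hav
  have hpq : Sim p q := by
    have := h.takeWhile a
    rwa [takeWhile_of_notMem _ hc.1, takeWhile_of_notMem _ haq] at this
  refine ⟨q, t, rfl, circ0_of_isCut ⟨haq, fun b hb => ?_⟩, hpq⟩
  have hb' : b ∈ p ++ a :: s := (h.mem_iff b).2 (by simp [hb])
  rw [← hpq.mem_iff b]
  rcases List.mem_append.1 hb' with h | h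
  · exact .inr h
  · rcases List.mem_cons.1 h with h | h
    · exact .inl h
    · exact hc.2 b h

/-! ### Factors of short-lex least words -/

theorem lex_of_append_left [LinearOrder A] (x : List A) {u v : List A}
    (h : List.Lex (· < ·) (x ++ u) (x ++ v)) : List.Lex (· < ·) u v := by
  induction x with
  | nil => exact h
  | cons a x ih => exact ih (List.lex_cons_iff.1 h)

theorem lex_of_append_right [LinearOrder A] {p u : List A} (y : List A)
    (hl : p.length = u.length) (h : List.Lex (· < ·) (p ++ y) (u ++ y)) :
    p = u ∨ List.Lex (· < ·) p u := by
  induction p generalizing u with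
  | nil => exact .inl (List.length_eq_zero_iff.1 hl.symm).symm
  | cons a p ih =>
    cases u with
    | nil => simp at hl
    | cons b u =>
      cases h with
      | rel h => exact .inr (.rel h)
      | cons h =>
        rcases ih (by simpa using hl) h with rfl | h
        · exact .inl rfl
        · exact .inr (.cons h)

theorem IsMinRep.factor [LinearOrder A] {w x p y : List A} (h : IsMinRep w (x ++ p ++ y)) :
    IsMinRep p p := by
  refine ⟨.refl p, fun u hu => ?_⟩
  have hs : Sim (x ++ u ++ y) w := ((Sim.refl x).append hu |>.append (Sim.refl y)).trans h.1
  rcases h.2 _ hs with h | h | ⟨h, h'⟩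
  · exact .inl (by simpa using h)
  · exact .inr (.inl (by simpa using h))
  · have hl : p.length = u.length := by simpa using h
    rw [List.append_assoc, List.append_assoc] at h'
    exact (lex_of_append_right y hl (lex_of_append_left x h')).imp id fun h => .inr ⟨hl, h⟩

theorem IsMinRep.unique [LinearOrder A] {w w' m m' : List A} (h : IsMinRep w m)
    (h' : IsMinRep w' m') (hs : Sim w w') : m = m' := by
  rcases h.2 m' (h'.1.trans hs.symm) with h₁ | h₁ | ⟨h₁, h₂⟩
  · exact h₁
  all_goals rcases h'.2 m (h.1.trans hs) with h₃ | h₃ | ⟨h₃, h₄⟩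
  · exact h₃.symm
  · omega
  · omega
  · exact h₃.symm
  · omega
  · exact (asymm_of (List.Lex (· < ·)) h₂ h₄).elim

theorem map_circb [LinearOrder A] (mw : List A → List A)
    (hmw : ∀ w : List A, IsMinRep w (mw w)) (w : List A) (b : Bool) :
    (circb w b).map mw = circb (mw w) b := by
  have hsim : Sim w (mw w) := (hmw w).1.symm
  by_cases hw : w = []
  · have hm : mw w = [] := hsim.nil_iff.1 hw
    cases b <;> simp [circb, circ1, circ0, hm] <;> simp [hw]
  cases b with
  | false =>
    obtain ⟨p, a, s, hwp, hc⟩ := exists_isCut w hw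
    have h0 : circ0 w = some p := hwp ▸ circ0_of_isCut hc
    obtain ⟨q, t, hq, hq0, hpq⟩ := (hwp ▸ hsim).circ0_eq hc
    rw [← hwp] at hq hq0
    have hmin : IsMinRep w ([] ++ q ++ a :: t) := by simpa [← hq] using hmw w
    simpa [circb, h0, hq0] using (hmw p).unique hmin.factor hpq
  | true =>
    obtain ⟨p, a, s, hwp, hc⟩ := exists_isCut w.reverse (by simpa using hw)
    have h0 : circ0 w.reverse = some p := hwp ▸ circ0_of_isCut hc
    have hrev : Sim (p ++ a :: s) (mw w).reverse := hwp ▸ hsim.reverse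
    obtain ⟨q, t, hq, hq0, hpq⟩ := hrev.circ0_eq hc
    have hmin : IsMinRep w ((t.reverse ++ [a]) ++ q.reverse ++ []) := by
      have hm : mw w = (t.reverse ++ [a]) ++ q.reverse ++ [] := by
        simpa using congrArg List.reverse hq
      exact hm ▸ hmw w
    simpa [circb, circ1, h0, hq0] using (hmw p.reverse).unique hmin.factor hpq.reverse

/-- `min(w ∘ α) = min(w) ∘ α`, both sides being undefined simultaneously. -/
theorem min_circw [Nonempty A] [Fintype A] [LinearOrder A]
    (mw : List A → List A) (hmw : ∀ w : List A, IsMinRep w (mw w))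
    (w : List A) (α : List Bool) :
    (circw w α).map mw = circw (mw w) α := by
  induction α generalizing w with
  | nil => rfl
  | cons b α ih =>
    simp only [circw]
    rw [← map_circb mw hmw w b]
    cases circb w b with
    | none => rfl
    | some v => exact ih v

end FreeBand
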